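/- Let n >= 1 be an integer, let mu : Q_p^* -> C^* be an unramified group homomorphism and mu' : Q_p^* -> C^* any group homomorphism, and set alpha = mu(p)^{-1} * sqrt(p). Let v : G -> C be a function such that: (i) v(b*g) = mu(a) * mu'(d) * |a/d|^{1/2} * v(g) for every b = [[a,b0],[0,d]] in B and g in G; (ii) v(g*k) = mu(d) * mu'(d) * v(g) for every g in G and every k in I_n whose (2,2) entry is d; (iii) v(k) = 0 for every k in K \ I_n; (iv) v(1) = 1. Then for every integer r >= 0 and every k in K: v(k*gamma^r) = alpha^r * mu'(d) if k lies in I_{n+r} and has (2,2) entry d, and v(k*gamma^r) = 0 otherwise. Moreover, v(k*gamma^r) - alpha^{-1} * v(k*gamma^{r+1}) = alpha^r * mu'(d) if k lies in I_{n+r} \ I_{n+r+1} with (2,2) entry d, and equals 0 for all other k in K. -/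

import Mathlib

open Matrix

noncomputable section

variable (p : ℕ) [Fact p.Prime]

/-- The underlying matrix of an element of `GL₂(ℚ_p)`. -/
def mat (g : GL (Fin 2) ℚ_[p]) : Matrix (Fin 2) (Fin 2) ℚ_[p] := g

/-- Membership in `K = GL₂(ℤ_p)`: all entries are `p`-adic integers and the
determinant is a unit of `ℤ_p`. -/
def inK (g : GL (Fin 2) ℚ_[p]) : Prop :=
  (∀ i j, ‖mat p g i j‖ ≤ 1) ∧ ‖(mat p g).det‖ = 1

/-- Membership in the Iwahori subgroup `I_n` of `K`: for `n = 0`, `I_0 = K`;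
for `n ≥ 1`, the diagonal entries are units of `ℤ_p` and the lower left entry
lies in `p^n ℤ_p`. -/
def inI (n : ℕ) (g : GL (Fin 2) ℚ_[p]) : Prop :=
  inK p g ∧ (n = 0 ∨
    (‖mat p g 0 0‖ = 1 ∧ ‖mat p g 1 1‖ = 1 ∧ ‖mat p g 1 0‖ ≤ (p : ℝ) ^ (-(n : ℤ))))

/-- `p` as a unit of `ℚ_p`. -/
def pu : ℚ_[p]ˣ :=
  Units.mk0 (p : ℚ_[p]) (by exact_mod_cast (Fact.out : p.Prime).ne_zero)

/-- The element `γ = diag(p⁻¹, 1)` of `GL₂(ℚ_p)`. -/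
def gamma : GL (Fin 2) ℚ_[p] :=
  Matrix.GeneralLinearGroup.mkOfDetNeZero !![(p : ℚ_[p])⁻¹, 0; 0, 1] (by
    have hp : (p : ℚ_[p]) ≠ 0 := by exact_mod_cast (Fact.out : p.Prime).ne_zero
    simp [Matrix.det_fin_two_of, hp])

/-- A character of `ℚ_p^×` is unramified if it is trivial on `ℤ_p^×`. -/
def Unramified (μ : ℚ_[p]ˣ →* ℂˣ) : Prop :=
  ∀ u : ℚ_[p]ˣ, ‖(u : ℚ_[p])‖ = 1 → μ u = 1

theorem mat_mul (g h : GL (Fin 2) ℚ_[p]) : mat p (g * h) = mat p g * mat p h := rfl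

theorem mat_gamma_pow (r : ℕ) :
    mat p (gamma p ^ r) = !![((p : ℚ_[p])⁻¹) ^ r, 0; 0, 1] := by
  induction r with
  | zero =>
    rw [pow_zero]
    ext i j
    fin_cases i <;> fin_cases j <;> simp [mat]
  | succ r ih =>
    rw [pow_succ, mat_mul, ih]
    have : mat p (gamma p) = !![(p : ℚ_[p])⁻¹, 0; 0, 1] := rfl
    rw [this]
    ext i j
    fin_cases i <;> fin_cases j <;> simp [Matrix.mul_apply, Fin.sum_univ_two, pow_succ]

theorem mat_det_ne (g : GL (Fin 2) ℚ_[p]) : (mat p g).det ≠ 0 := by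
  have := (Matrix.isUnit_iff_isUnit_det (mat p g)).1 ⟨g, rfl⟩
  exact this.ne_zero

theorem dec1 (g : GL (Fin 2) ℚ_[p]) (h : mat p g 1 1 ≠ 0) :
    ∃ b k : GL (Fin 2) ℚ_[p], g = b * k ∧
      mat p b = !![(mat p g).det / mat p g 1 1, mat p g 0 1; 0, mat p g 1 1] ∧
      mat p k = !![1, 0; mat p g 1 0 / mat p g 1 1, 1] := by
  refine ⟨Matrix.GeneralLinearGroup.mkOfDetNeZero
    !![(mat p g).det / mat p g 1 1, mat p g 0 1; 0, mat p g 1 1] ?_,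
    Matrix.GeneralLinearGroup.mkOfDetNeZero
    !![1, 0; mat p g 1 0 / mat p g 1 1, 1] ?_, ?_, rfl, rfl⟩
  · have := mat_det_ne p g
    simp [Matrix.det_fin_two_of, h, this]
  · simp [Matrix.det_fin_two_of]
  · apply Units.ext
    change mat p g = !![(mat p g).det / mat p g 1 1, mat p g 0 1; 0, mat p g 1 1] *
      !![1, 0; mat p g 1 0 / mat p g 1 1, 1]
    rw [Matrix.det_fin_two]
    ext i j
    fin_cases i <;> fin_cases j <;> simp [Matrix.mul_apply, Fin.sum_univ_two] <;> field_simp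
    ring

theorem dec2 (g : GL (Fin 2) ℚ_[p]) (h : mat p g 1 0 ≠ 0) :
    ∃ b k : GL (Fin 2) ℚ_[p], g = b * k ∧
      mat p b = !![-(mat p g).det / mat p g 1 0, mat p g 0 0; 0, mat p g 1 0] ∧
      mat p k = !![0, 1; 1, mat p g 1 1 / mat p g 1 0] := by
  refine ⟨Matrix.GeneralLinearGroup.mkOfDetNeZero
    !![-(mat p g).det / mat p g 1 0, mat p g 0 0; 0, mat p g 1 0] ?_,
    Matrix.GeneralLinearGroup.mkOfDetNeZero
    !![0, 1; 1, mat p g 1 1 / mat p g 1 0] ?_, ?_, rfl, rfl⟩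
  · have := mat_det_ne p g
    simp [Matrix.det_fin_two_of, h, this]
  · simp [Matrix.det_fin_two_of]
  · apply Units.ext
    change mat p g = !![-(mat p g).det / mat p g 1 0, mat p g 0 0; 0, mat p g 1 0] *
      !![0, 1; 1, mat p g 1 1 / mat p g 1 0]
    rw [Matrix.det_fin_two]
    ext i j
    fin_cases i <;> fin_cases j <;> simp [Matrix.mul_apply, Fin.sum_univ_two] <;> field_simp
    ring

theorem norm_one_entries {a b c d : ℚ_[p]} (ha : ‖a‖ ≤ 1) (hb : ‖b‖ ≤ 1) (hd : ‖d‖ ≤ 1)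
    (hc : ‖c‖ < 1) (h : ‖a * d - b * c‖ = 1) : ‖a‖ = 1 ∧ ‖d‖ = 1 := by
  have h1 : ‖b * c‖ < 1 := by
    rw [norm_mul]
    nlinarith [norm_nonneg b, norm_nonneg c]
  have h2 : 1 ≤ ‖a * d‖ := by
    by_contra hlt
    push Not at hlt
    have := Padic.nonarchimedean (a * d) (-(b * c))
    rw [← sub_eq_add_neg, h, norm_neg] at this
    exact absurd this (not_le.2 (max_lt hlt h1))
  rw [norm_mul] at h2
  constructor <;> nlinarith [norm_nonneg a, norm_nonneg d]

theorem inI_mono {m : ℕ} {k : GL (Fin 2) ℚ_[p]} (hm : m ≠ 0) (h : inI p (m + 1) k) :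
    inI p m k := by
  obtain ⟨h1, h2⟩ := h
  obtain ⟨h3, h4, h5⟩ := h2.resolve_left (by omega)
  refine ⟨h1, Or.inr ⟨h3, h4, h5.trans ?_⟩⟩
  have : (1 : ℝ) ≤ p := by exact_mod_cast (Fact.out : p.Prime).one_lt.le
  apply zpow_le_zpow_right₀ this
  push_cast
  omega

theorem mat_kg (r : ℕ) (k : GL (Fin 2) ℚ_[p]) :
    mat p (k * gamma p ^ r) = !![mat p k 0 0 * ((p : ℚ_[p])⁻¹) ^ r, mat p k 0 1;
      mat p k 1 0 * ((p : ℚ_[p])⁻¹) ^ r, mat p k 1 1] := by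
  rw [mat_mul, mat_gamma_pow]
  ext i j
  fin_cases i <;> fin_cases j <;> simp [Matrix.mul_apply, Fin.sum_univ_two]

/-- Lemma «calcul-SP1»: values of the translates `γ^r · v` of the new vector
`v` of the ramified principal series `Ind_B^G (μ ⊗ μ')` with `μ` unramified
and conductor `n = cond(μ') ≥ 1`. -/
theorem stmt2 (n : ℕ) (hn : 1 ≤ n)
    (μ μ' : ℚ_[p]ˣ →* ℂˣ) (hμ : Unramified p μ)
    (α : ℂ) (hα : α = ((μ (pu p) : ℂ))⁻¹ * (Real.sqrt p : ℂ))
    (v : GL (Fin 2) ℚ_[p] → ℂ)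
    (hvB : ∀ (b g : GL (Fin 2) ℚ_[p]) (a d : ℚ_[p]ˣ),
      mat p b 1 0 = 0 → mat p b 0 0 = a → mat p b 1 1 = d →
      v (b * g) = (μ a : ℂ) * (μ' d : ℂ) *
        (Real.sqrt ‖(a : ℚ_[p]) / (d : ℚ_[p])‖ : ℂ) * v g)
    (hvI : ∀ (g k : GL (Fin 2) ℚ_[p]) (d : ℚ_[p]ˣ),
      inI p n k → mat p k 1 1 = d →
      v (g * k) = (μ d : ℂ) * (μ' d : ℂ) * v g)
    (hvsupp : ∀ k : GL (Fin 2) ℚ_[p], inK p k → ¬ inI p n k → v k = 0)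
    (hv1 : v 1 = 1) :
    ∀ (r : ℕ) (k : GL (Fin 2) ℚ_[p]),
      -- values of `γ^r · v`
      ((∀ d : ℚ_[p]ˣ, inI p (n + r) k → mat p k 1 1 = d →
          v (k * gamma p ^ r) = α ^ r * (μ' d : ℂ)) ∧
        (inK p k → ¬ inI p (n + r) k → v (k * gamma p ^ r) = 0)) ∧
      -- values of `γ^r · v - α⁻¹ γ^{r+1} · v`
      ((∀ d : ℚ_[p]ˣ, inI p (n + r) k → ¬ inI p (n + r + 1) k →
          mat p k 1 1 = d →
          v (k * gamma p ^ r) - α⁻¹ * v (k * gamma p ^ (r + 1)) =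
            α ^ r * (μ' d : ℂ)) ∧
        (inK p k → ¬ (inI p (n + r) k ∧ ¬ inI p (n + r + 1) k) →
          v (k * gamma p ^ r) - α⁻¹ * v (k * gamma p ^ (r + 1)) = 0)) := by
  have hp0 : (0 : ℝ) < p := by exact_mod_cast (Fact.out : p.Prime).pos
  have hp1 : (1 : ℝ) < p := by exact_mod_cast (Fact.out : p.Prime).one_lt
  have hpq : (p : ℚ_[p]) ≠ 0 := by exact_mod_cast (Fact.out : p.Prime).ne_zero
  have hnq : ∀ r : ℕ, ‖((p : ℚ_[p])⁻¹) ^ r‖ = (p : ℝ) ^ r := by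
    intro r
    rw [norm_pow, norm_inv, Padic.norm_p, inv_inv]
  have hα0 : α ≠ 0 := by
    rw [hα]
    refine mul_ne_zero (inv_ne_zero (Units.ne_zero _)) ?_
    exact_mod_cast (Real.sqrt_pos.2 hp0).ne'
  have hpow : ∀ r : ℕ, (p : ℝ) ^ (-((n + r : ℕ) : ℤ)) * (p : ℝ) ^ r = (p : ℝ) ^ (-(n : ℤ)) := by
    intro r
    rw [← zpow_natCast (p : ℝ) r, ← zpow_add₀ hp0.ne']
    congr 1
    push_cast
    ring
  have hlt1 : ∀ r : ℕ, (p : ℝ) ^ (-((n + r : ℕ) : ℤ)) < 1 := by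
    intro r
    apply zpow_lt_one_of_neg₀ hp1
    omega
  have A : ∀ (r : ℕ) (k : GL (Fin 2) ℚ_[p]) (d : ℚ_[p]ˣ), inI p (n + r) k → mat p k 1 1 = d →
      v (k * gamma p ^ r) = α ^ r * (μ' d : ℂ) := by
    intro r k d hk hd
    obtain ⟨hK, hI⟩ := hk
    obtain ⟨h00, h11, h10⟩ := hI.resolve_left (by omega)
    have hg := mat_kg p r k
    have hdet : (mat p (k * gamma p ^ r)).det = (mat p k).det * ((p : ℚ_[p])⁻¹) ^ r := by
      rw [hg, Matrix.det_fin_two_of, Matrix.det_fin_two]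
      ring
    obtain ⟨b, l, hbl, hb, hl⟩ := dec1 p (k * gamma p ^ r) (by
      rw [hg]
      simp [hd])
    rw [hdet] at hb
    simp only [hg] at hb hl
    have hdk := mat_det_ne p k
    let u : ℚ_[p]ˣ := Units.mk0 ((mat p k).det) hdk * d⁻¹
    have hu : ‖(u : ℚ_[p])‖ = 1 := by
      simp only [u, Units.val_mul, Units.val_mk0, norm_mul, hK.2, one_mul,
        Units.val_inv_eq_inv_val, norm_inv]
      rw [← hd, h11, inv_one]
    have hdn : ‖(d : ℚ_[p])‖ = 1 := by rw [← hd, h11]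
    have hvl : v l = 1 := by
      have := hvI 1 l 1 ?_ ?_
      · simpa [hv1] using this
      · have hx : ‖mat p k 1 0 * ((p : ℚ_[p])⁻¹) ^ r / mat p k 1 1‖ ≤ (p : ℝ) ^ (-(n : ℤ)) := by
          rw [norm_div, h11, div_one, norm_mul, hnq, ← hpow r]
          gcongr
        have hx1 := hx.trans (hlt1 0).le
        refine ⟨⟨?_, ?_⟩, Or.inr ⟨?_, ?_, ?_⟩⟩
        · intro i j
          rw [hl]
          fin_cases i <;> fin_cases j
          · simp
          · simp
          · simpa using hx1
          · simp
        · rw [hl]; simp [Matrix.det_fin_two_of]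
        · rw [hl]; simp
        · rw [hl]; simp
        · rw [hl]; simpa using hx
      · rw [hl]; simp
    rw [hbl, hvB b l (u * ((pu p)⁻¹) ^ r) d (by rw [hb]; simp) ?_ (by rw [hb]; simp [hd]), hvl]
    · rw [norm_div, hdn, div_one, Units.val_mul, norm_mul, hu, one_mul, map_mul, hμ u hu, hα]
      have h3 : ‖(((pu p)⁻¹ ^ r : ℚ_[p]ˣ) : ℚ_[p])‖ = (p : ℝ) ^ r := by
        rw [← hnq]
        simp [pu]
      have h4 : Real.sqrt ((p : ℝ) ^ r) = Real.sqrt p ^ r := by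
        rw [Real.sqrt_eq_iff_mul_self_eq (by positivity) (by positivity), ← mul_pow,
          Real.mul_self_sqrt hp0.le]
      rw [h3, h4]
      simp only [map_pow, map_inv, one_mul, Units.val_pow_eq_pow_val, Units.val_inv_eq_inv_val]
      push_cast
      ring
    · rw [hb]
      simp [u, hd, pu]
      ring
  have B : ∀ (r : ℕ) (k : GL (Fin 2) ℚ_[p]), inK p k → ¬ inI p (n + r) k →
      v (k * gamma p ^ r) = 0 := by
    intro r k hK hI
    have hg := mat_kg p r k
    have hgd := mat_det_ne p (k * gamma p ^ r)
    set c := mat p k 1 0 * ((p : ℚ_[p])⁻¹) ^ r with hc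
    have hcn : ‖c‖ = ‖mat p k 1 0‖ * (p : ℝ) ^ r := by rw [hc, norm_mul, hnq]
    by_cases hle : ‖c‖ ≤ ‖mat p k 1 1‖
    · have hd0 : mat p k 1 1 ≠ 0 := by
        intro h0
        rw [h0, norm_zero] at hle
        have : c = 0 := norm_le_zero_iff.1 hle
        apply hgd
        rw [hg, Matrix.det_fin_two_of, h0, this]
        ring
      obtain ⟨b, l, hbl, hb, hl⟩ := dec1 p (k * gamma p ^ r) (by rw [hg]; simpa using hd0)
      have hA0 : (mat p (k * gamma p ^ r)).det / mat p k 1 1 ≠ 0 := div_ne_zero hgd hd0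
      have h11 : mat p (k * gamma p ^ r) 1 1 = mat p k 1 1 := by rw [hg]; simp
      have h10 : mat p (k * gamma p ^ r) 1 0 = c := by rw [hg]; simp
      rw [h11] at hb hl
      rw [h10] at hl
      rw [hbl, hvB b l (Units.mk0 _ hA0) (Units.mk0 _ hd0) (by rw [hb]; simp) (by rw [hb]; simp)
        (by rw [hb]; simp), hvsupp l, mul_zero]
      · have hx : ‖c / mat p k 1 1‖ ≤ 1 := by
          rw [norm_div]
          exact div_le_one_of_le₀ hle (norm_nonneg _)
        refine ⟨?_, ?_⟩
        · intro i j
          rw [hl]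
          fin_cases i <;> fin_cases j
          · simp
          · simp
          · simpa using hx
          · simp
        · rw [hl]; simp [Matrix.det_fin_two_of]
      · intro hl'
        obtain ⟨-, -, hx⟩ := hl'.2.resolve_left (by omega)
        rw [hl] at hx
        have hx' : ‖c / mat p k 1 1‖ ≤ (p : ℝ) ^ (-(n : ℤ)) := by simpa using hx
        rw [norm_div, div_le_iff₀ (norm_pos_iff.2 hd0)] at hx'
        have h1 : ‖mat p k 1 0‖ ≤ (p : ℝ) ^ (-((n + r : ℕ) : ℤ)) := by
          have hpr : (0 : ℝ) < (p : ℝ) ^ r := by positivity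
          rw [← mul_le_mul_iff_left₀ hpr, hpow, ← hcn]
          refine hx'.trans ?_
          exact mul_le_of_le_one_right (by positivity) (hK.1 1 1)
        have hdet := hK.2
        rw [Matrix.det_fin_two] at hdet
        obtain ⟨e1, e2⟩ := norm_one_entries p (hK.1 0 0) (hK.1 0 1) (hK.1 1 1)
          (h1.trans_lt (hlt1 r)) hdet
        exact hI ⟨hK, Or.inr ⟨e1, e2, h1⟩⟩
    · push Not at hle
      have hc0 : c ≠ 0 := norm_pos_iff.1 ((norm_nonneg _).trans_lt hle)
      obtain ⟨b, l, hbl, hb, hl⟩ := dec2 p (k * gamma p ^ r) (by rw [hg]; simpa using hc0)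
      have hA0 : -(mat p (k * gamma p ^ r)).det / c ≠ 0 := div_ne_zero (neg_ne_zero.2 hgd) hc0
      have h11 : mat p (k * gamma p ^ r) 1 1 = mat p k 1 1 := by rw [hg]; simp
      have h10 : mat p (k * gamma p ^ r) 1 0 = c := by rw [hg]; simp
      rw [h10] at hb hl
      rw [h11] at hl
      rw [hbl, hvB b l (Units.mk0 _ hA0) (Units.mk0 _ hc0) (by rw [hb]; simp) (by rw [hb]; simp)
        (by rw [hb]; simp), hvsupp l, mul_zero]
      · have hx : ‖mat p k 1 1 / c‖ ≤ 1 := by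
          rw [norm_div]
          exact div_le_one_of_le₀ hle.le (norm_nonneg _)
        refine ⟨?_, ?_⟩
        · intro i j
          rw [hl]
          fin_cases i <;> fin_cases j
          · simp
          · simp
          · simp
          · simpa using hx
        · rw [hl]; simp [Matrix.det_fin_two_of]
      · intro hl'
        obtain ⟨hx, -, -⟩ := hl'.2.resolve_left (by omega)
        rw [hl] at hx
        simp at hx
  intro r k
  refine ⟨⟨A r k, B r k⟩, ?_, ?_⟩
  · intro d h1 h2 hd
    rw [A r k d h1 hd, B (r + 1) k h1.1 h2, mul_zero, sub_zero]
  · intro hK h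
    by_cases h1 : inI p (n + r) k
    · have h2 : inI p (n + (r + 1)) k := by
        by_contra h2
        exact h ⟨h1, h2⟩
      obtain ⟨-, h11, -⟩ := h1.2.resolve_left (by omega)
      have hd0 : mat p k 1 1 ≠ 0 := by
        intro h0
        rw [h0, norm_zero] at h11
        exact zero_ne_one h11
      rw [A r k (Units.mk0 _ hd0) h1 rfl, A (r + 1) k (Units.mk0 _ hd0) h2 rfl, pow_succ]
      field_simp
      ring
    · have h2 : ¬ inI p (n + (r + 1)) k := fun h2 => h1 (inI_mono p (by omega) h2)
      rw [B r k hK h1, B (r + 1) k hK h2, mul_zero, sub_zero]
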